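/- Let n ≥ 3 and let G_n = ({x_1, …, x_n}, ω) be the cycle network, where ω(x_i, x_j) is the representative of (j − i) mod n in {0, 1, …, n−1}. Then for every δ ∈ ℝ, the Dowker sink complex Dsi_δ equals the walk-length complex W_δ; that is, a nonempty subset σ ⊆ {x_1, …, x_n} admits a sink x' with ω(x, x') ≤ δ for all x ∈ σ if and only if f_{G_n}(σ) ≤ δ. -/

import Mathlib

/-!
A walk covering `σ` has weight at least `ω(v, x')` for each `v ∈ σ`, where `x'` is the last
vertex of the walk, by the triangle inequality (`exists_sink_of_walk`). All weights are natural
numbers, so if `wlf ≤ δ` then some covering walk has weight at most `δ`, and its last vertex is a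
sink. Conversely, if `x'` is a sink for `σ` at level `δ`, then the walk
`x' - k, …, x' - 1, x'` with `k = ⌊δ⌋₊` unit steps covers `σ` (`exists_backward_walk`), so
`wlf ≤ k ≤ δ`.
-/

/-- The weight of a walk in a network (complete weighted digraph), given as a list of
vertices: the sum of the weights of consecutive pairs. -/
def walkWeight {X : Type*} (ω : X → X → ℝ) (l : List X) : ℝ :=
  ((l.zip l.tail).map fun p => ω p.1 p.2).sum

/-- The walk-length filtration value of a set of vertices of a network: the infimum of the
weights of walks containing all vertices of `σ`. -/
noncomputable def wlf {X : Type*} (ω : X → X → ℝ) (σ : Set X) : ℝ :=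
  sInf {c | ∃ l : List X, l ≠ [] ∧ (∀ v ∈ σ, v ∈ l) ∧ walkWeight ω l = c}

/-- The weight function of the cycle network `G_n` on `Fin n`:
`ω(x_i, x_j)` is the representative of `(j − i) mod n` in `{0, …, n−1}`. -/
def cycleWeight (n : ℕ) (i j : Fin n) : ℝ := (((j - i : Fin n) : ℕ) : ℝ)

lemma walkWeight_cons_cons {X : Type*} (ω : X → X → ℝ) (a b : X) (l : List X) :
    walkWeight ω (a :: b :: l) = ω a b + walkWeight ω (b :: l) := by
  simp [walkWeight]

lemma walkWeight_singleton {X : Type*} (ω : X → X → ℝ) (a : X) : walkWeight ω [a] = 0 := by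
  simp [walkWeight]

lemma cycleWeight_nonneg (n : ℕ) (i j : Fin n) : 0 ≤ cycleWeight n i j := Nat.cast_nonneg _

lemma cycleWeight_self (n : ℕ) [NeZero n] (i : Fin n) : cycleWeight n i i = 0 := by
  simp [cycleWeight]

lemma cycleWeight_triangle (n : ℕ) [NeZero n] (a b c : Fin n) :
    cycleWeight n a c ≤ cycleWeight n a b + cycleWeight n b c := by
  have h : c - a = (b - a) + (c - b) := by abel
  unfold cycleWeight
  rw [h, Fin.val_add]
  exact_mod_cast Nat.mod_le _ _

lemma exists_nat_walkWeight (n : ℕ) (l : List (Fin n)) :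
    ∃ k : ℕ, walkWeight (cycleWeight n) l = k := by
  induction l with
  | nil => exact ⟨0, by simp [walkWeight]⟩
  | cons a l ih =>
    cases l with
    | nil => exact ⟨0, by simp [walkWeight_singleton]⟩
    | cons b l =>
      obtain ⟨k, hk⟩ := ih
      refine ⟨((b - a : Fin n) : ℕ) + k, ?_⟩
      rw [walkWeight_cons_cons, hk, cycleWeight]
      push_cast
      rfl

/-- The sink is the last vertex of the walk. -/
lemma exists_sink_of_walk (n : ℕ) [NeZero n] (a : Fin n) (l : List (Fin n)) :
    ∃ x' : Fin n, ∀ v ∈ a :: l, cycleWeight n v x' ≤ walkWeight (cycleWeight n) (a :: l) := by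
  induction l generalizing a with
  | nil =>
    refine ⟨a, fun v hv => ?_⟩
    rw [List.mem_singleton.1 hv, cycleWeight_self, walkWeight_singleton]
  | cons b l ih =>
    obtain ⟨x', hx'⟩ := ih b
    refine ⟨x', fun v hv => ?_⟩
    rw [walkWeight_cons_cons]
    rcases List.mem_cons.1 hv with rfl | hv
    · linarith [cycleWeight_triangle n v b x', hx' b List.mem_cons_self]
    · linarith [hx' v hv, cycleWeight_nonneg n a b]

open Fin.NatCast in
/-- The walk is `x - k, …, x - 1, x`. It may wind around the cycle, since `k ≥ n` is allowed. -/
lemma exists_backward_walk (n : ℕ) [NeZero n] (hn : 2 ≤ n) (x : Fin n) (k : ℕ) :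
    ∃ l : List (Fin n), (∀ j ≤ k, x - (j : Fin n) ∈ (x - (k : Fin n)) :: l) ∧
      walkWeight (cycleWeight n) ((x - (k : Fin n)) :: l) = k := by
  induction k with
  | zero => exact ⟨[], by simp, by simp [walkWeight_singleton]⟩
  | succ k ih =>
    obtain ⟨l, hl, hw⟩ := ih
    refine ⟨(x - (k : Fin n)) :: l, fun j hj => ?_, ?_⟩
    · rcases Nat.le_succ_iff.1 hj with hj | rfl
      · exact List.mem_cons_of_mem _ (hl j hj)
      · exact List.mem_cons_self
    · have h : (x - (k : Fin n)) - (x - ((k + 1 : ℕ) : Fin n)) = 1 := by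
        rw [Nat.cast_add, Nat.cast_one]
        abel
      have h1 : ((1 : Fin n) : ℕ) = 1 := by
        rw [Fin.val_one', Nat.mod_eq_of_lt (by omega)]
      rw [walkWeight_cons_cons, hw, cycleWeight, h, h1]
      push_cast
      ring

/-- For the cycle network `G_n` (`n ≥ 3`), the Dowker sink complex and the walk-length
complex coincide at every level `δ ∈ ℝ`: a nonempty `σ` admits a sink `x'` with
`ω(x, x') ≤ δ` for all `x ∈ σ` if and only if `f_{G_n}(σ) ≤ δ`. -/
theorem stmt14 (n : ℕ) (hn : 3 ≤ n) (δ : ℝ) (σ : Set (Fin n)) (hσ : σ.Nonempty) :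
    (∃ x' : Fin n, ∀ x ∈ σ, cycleWeight n x x' ≤ δ) ↔ wlf (cycleWeight n) σ ≤ δ := by
  have : NeZero n := ⟨by omega⟩
  constructor
  · rintro ⟨x', hx'⟩
    obtain ⟨v₀, hv₀⟩ := hσ
    have hδ : 0 ≤ δ := (cycleWeight_nonneg n v₀ x').trans (hx' v₀ hv₀)
    obtain ⟨l, hl, hw⟩ := exists_backward_walk n (by omega) x' ⌊δ⌋₊
    refine le_trans ?_ (Nat.floor_le hδ)
    refine csInf_le ⟨0, ?_⟩ ⟨_, List.cons_ne_nil _ _, fun v hv => ?_, hw⟩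
    · rintro _ ⟨l, -, -, rfl⟩
      obtain ⟨k, hk⟩ := exists_nat_walkWeight n l
      rw [hk]
      exact Nat.cast_nonneg k
    · have h := hl ((x' - v : Fin n) : ℕ) (Nat.le_floor (hx' v hv))
      rwa [Fin.cast_val_eq_self, sub_sub_cancel] at h
  · intro h
    have hne : {c | ∃ l : List (Fin n), l ≠ [] ∧ (∀ v ∈ σ, v ∈ l) ∧
        walkWeight (cycleWeight n) l = c}.Nonempty :=
      ⟨_, List.finRange n, by simpa using NeZero.ne n, by simp, rfl⟩
    -- Weights are integers, so a walk of weight below `⌊δ⌋ + 1` already has weight at most `δ`.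
    obtain ⟨_, ⟨l, hl, hσl, rfl⟩, hlt⟩ :=
      exists_lt_of_csInf_lt hne (h.trans_lt (Int.lt_floor_add_one δ))
    obtain ⟨k, hk⟩ := exists_nat_walkWeight n l
    have hkδ : walkWeight (cycleWeight n) l ≤ δ := by
      rw [hk] at hlt ⊢
      have h1 : (k : ℤ) < ⌊δ⌋ + 1 := by exact_mod_cast hlt
      exact_mod_cast Int.le_floor.1 (Int.lt_add_one_iff.1 h1)
    obtain ⟨a, l, rfl⟩ := List.exists_cons_of_ne_nil hl
    obtain ⟨x', hx'⟩ := exists_sink_of_walk n a l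
    exact ⟨x', fun v hv => (hx' v (hσl v hv)).trans hkδ⟩
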